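/- arXiv:1305.1664 — 2 statements merged into one kernel-verified Lean document; each statement's English description precedes it below -/
import Mathlib

section
/- Let m ≥ n ≥ 1 and let A₁, A₂ be n×m integer matrices such that A₁−A₂ has rank n over ℚ. Then MCC(f_{A₁}, f_{A₂}) equals the (finite) index [ℤⁿ : (A₁−A₂)(ℤᵐ)] of the image of the ℤ-linear map ℤᵐ → ℤⁿ given by A₁−A₂. -/
/-- The `k`-torus `(ℝ/ℤ)ᵏ`. -/
abbrev Torus (k : ℕ) : Type := Fin k → AddCircle (1 : ℝ)

/-- The continuous homomorphism `Tᵐ → Tⁿ` induced by an `n × m` integer matrix. -/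
noncomputable def torusHom {m n : ℕ} (A : Matrix (Fin n) (Fin m) ℤ) :
    C(Torus m, Torus n) :=
  ⟨fun x j => ∑ i, A j i • x i, by
    refine continuous_pi fun j => ?_
    exact continuous_finset_sum _ fun i _ => (continuous_apply i).zsmul (A j i)⟩

/-- The minimum number of coincidence components `MCC(f₁,f₂)`: the minimum, over all
pairs of maps homotopic to `f₁` and `f₂` respectively, of the number of path
components of the coincidence set (as an extended natural number). -/
noncomputable def MCC {X Y : Type} [TopologicalSpace X] [TopologicalSpace Y]
    (f₁ f₂ : C(X, Y)) : ℕ∞ :=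
  ⨅ p : {q : C(X, Y) × C(X, Y) // f₁.Homotopic q.1 ∧ f₂.Homotopic q.2},
    ENat.card (ZerothHomotopy {x : X // (p : C(X, Y) × C(X, Y)).1 x = (p : C(X, Y) × C(X, Y)).2 x})

/-!
For integer matrices with difference `A = A₁ - A₂`, the homotopy lifting property shows that the
coincidence set of maps homotopic to `torusHom A₁` and `torusHom A₂` is the zero set of
`x ↦ A x + h x`, where `h : Tᵐ → ℝⁿ` is a continuous function read modulo `ℤⁿ`. On the
universal covering this map is `G X = A X + h X`, which takes integer values at the lifts of the
zeros, and translating `X` by `k ∈ ℤᵐ` changes `G X` by `A k`. Hence `G` induces a locally constant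
map from the zeros to `ℤⁿ / A ℤᵐ`, the Nielsen class. Every class is attained: with `A B = 1` over
`ℝ`, the map `y ↦ G (B y) = y + h (B y)` is a bounded perturbation of the identity of `ℝⁿ`, hence
surjective by Brouwer's theorem. For `h = 0`, two zeros of the same class are joined by the image
of a straight segment on which `A` is constant, so the bound is attained.

Brouwer's theorem is obtained by the Milnor–Rogers argument. If `r` retracts the ball onto the
sphere and `g = r - id`, then `id + t g` maps the ball bijectively onto itself for small `t > 0`, so
the polynomial `t ↦ ∫ det (1 + t Dg)` is equal to the volume of the ball for small `t`, hence also
for `t = 1`; but `1 + Dg = Dr` is singular everywhere.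
-/

open Filter MeasureTheory Metric Set Topology
open scoped Matrix NNReal

section Matrix

variable {m n : Type*} [Fintype m] [Fintype n]

theorem exists_mul_eq_one_of_rank_eq_card [DecidableEq n] {K : Type*} [Field K] {A : Matrix n m K}
    (hA : A.rank = Fintype.card n) : ∃ B : Matrix m n K, A * B = 1 := by
  refine Matrix.mulVec_surjective_iff_exists_right_inverse.mp
    (LinearMap.range_eq_top (f := A.mulVecLin).mp ?_)
  exact Submodule.eq_top_of_finrank_eq (hA.trans (Module.finrank_fintype_fun_eq_card K).symm)

theorem finite_quotient_range_mulVecLin_of_rank_eq_card {A : Matrix n m ℤ}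
    (hA : (A.map (Int.cast : ℤ → ℚ)).rank = Fintype.card n) :
    Finite ((n → ℤ) ⧸ LinearMap.range A.mulVecLin) := by
  classical
  obtain ⟨B, hB⟩ := exists_mul_eq_one_of_rank_eq_card hA
  have mul_num : A * B.num = (B.den : ℤ) • 1 := by
    refine Matrix.map_injective (Int.cast_injective (α := ℚ)) ?_
    calc (A * B.num).map (Int.castRingHom ℚ)
        = A.map Int.cast * B.num.map Int.cast := Matrix.map_mul
      _ = (B.den : ℚ) • 1 := by
        rw [← hB, ← Matrix.mul_smul]
        nth_rw 3 [← B.inv_denom_smul_num]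
        rw [smul_inv_smul₀ (Nat.cast_ne_zero.mpr B.den_ne_zero)]
      _ = ((B.den : ℤ) • (1 : Matrix n n ℤ)).map Int.cast := by
        ext i j
        simp only [Matrix.map_apply, Matrix.smul_apply, Matrix.one_apply]
        split_ifs <;> simp
  refine Module.finite_of_fg_torsion _ fun {q} => ?_
  induction q using Submodule.Quotient.induction_on with
  | H v =>
    refine ⟨⟨B.den, mem_nonZeroDivisors_of_ne_zero (Int.natCast_ne_zero.mpr B.den_ne_zero)⟩, ?_⟩
    refine (Submodule.Quotient.mk_eq_zero _).mpr ⟨B.num.mulVec v, ?_⟩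
    rw [Matrix.mulVecLin_apply, Matrix.mulVec_mulVec, mul_num, Matrix.smul_mulVec,
      Matrix.one_mulVec]

theorem exists_map_intCast_mul_eq_one_of_rank_eq_card [DecidableEq n] {A : Matrix n m ℤ}
    (hA : (A.map (Int.cast : ℤ → ℚ)).rank = Fintype.card n) (K : Type*) [Field K] [CharZero K] :
    ∃ B : Matrix m n K, A.map (Int.cast : ℤ → K) * B = 1 := by
  obtain ⟨B, hB⟩ := exists_mul_eq_one_of_rank_eq_card hA
  have map_map : A.map (Int.cast : ℤ → K) = (A.map (Int.cast : ℤ → ℚ)).map (Rat.castHom K) := by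
    ext i j
    simp
  exact ⟨B.map (Rat.castHom K), by
    rw [map_map, ← Matrix.map_mul, hB, Matrix.map_one _ (map_zero _) (map_one _)]⟩

end Matrix

section Polynomial

theorem integral_eval_eq_of_infinite {α : Type*} [MeasurableSpace α] {μ : Measure α}
    {p : α → Polynomial ℝ} {N : ℕ} (hdeg : ∀ x, (p x).natDegree ≤ N)
    (hint : ∀ t, Integrable (fun x => (p x).eval t) μ) {S : Set ℝ} (hS : S.Infinite) {c : ℝ}
    (hc : ∀ t ∈ S, ∫ x, (p x).eval t ∂μ = c) (t : ℝ) :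
    ∫ x, (p x).eval t ∂μ = c := by
  obtain ⟨s, hsS, hs⟩ := hS.exists_subset_card_eq (N + 1)
  let L : ℝ → ℝ := fun i => (Lagrange.basis s id i).eval t
  have interpolation : ∀ x, (p x).eval t = ∑ i ∈ s, (p x).eval i * L i := by
    intro x
    have hlt : (p x).degree < s.card := by
      rw [hs]
      exact Polynomial.degree_le_natDegree.trans_lt (by exact_mod_cast Nat.lt_succ_of_le (hdeg x))
    conv_lhs => rw [Lagrange.eq_interpolate (injOn_id _) hlt]
    simp only [Lagrange.interpolate_apply, Polynomial.eval_finsetSum, Polynomial.eval_mul,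
      Polynomial.eval_C, id, L]
  have sum_L : ∑ i ∈ s, L i = 1 := by
    rw [← Polynomial.eval_finsetSum, Lagrange.sum_basis (injOn_id _)
      (Finset.card_pos.mp (by omega)), Polynomial.eval_one]
  calc ∫ x, (p x).eval t ∂μ = ∑ i ∈ s, (∫ x, (p x).eval i ∂μ) * L i := by
        simp_rw [interpolation, integral_finsetSum s fun i _ => (hint i).mul_const (L i),
          integral_mul_const]
    _ = c := by
        rw [Finset.sum_congr rfl fun i hi => by rw [hc i (hsS hi)], ← Finset.mul_sum, sum_L,
          mul_one]

theorem exists_polynomial_eval_eq_det_one_add_smul {R M : Type*} [CommRing R] [Nontrivial R]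
    [AddCommGroup M] [Module R M] [Module.Free R M] [Module.Finite R M] (f : Module.End R M) :
    ∃ p : Polynomial R, p.natDegree ≤ Module.finrank R M ∧
      ∀ t, p.eval t = LinearMap.det (1 + t • f) := by
  classical
  let b := Module.Free.chooseBasis R M
  let A := LinearMap.toMatrix b b f
  refine ⟨((Polynomial.X : Polynomial R) • A.map Polynomial.C
    + (1 : Matrix _ _ R).map Polynomial.C).det, ?_, fun t => ?_⟩
  · rw [Module.finrank_eq_card_chooseBasisIndex]
    exact Polynomial.natDegree_det_X_add_C_le A 1
  · rw [← Polynomial.coe_evalRingHom, RingHom.map_det, ← LinearMap.det_toMatrix b]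
    congr 1
    ext i j
    simp [A, Matrix.one_apply, LinearMap.toMatrix_apply, apply_ite, Finsupp.single_apply,
      eq_comm, add_comm, mul_comm t]

end Polynomial

section Displacement

theorem bijective_add_of_lipschitzWith_lt_one {E : Type*} [NormedAddCommGroup E]
    [CompleteSpace E] {g : E → E} {K : ℝ≥0} (hg : LipschitzWith K g) (hK : K < 1) :
    Function.Bijective fun x => x + g x := by
  refine Function.bijective_iff_existsUnique _ |>.mpr fun y => ?_
  have contracting : ContractingWith K fun x => y - g x :=
    ⟨hK, by simpa using (LipschitzWith.const y).sub hg⟩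
  exact ⟨contracting.fixedPoint, eq_sub_iff_add_eq.mp contracting.fixedPoint_isFixedPt.symm,
    fun x hx => contracting.fixedPoint_unique (eq_sub_of_add_eq hx).symm⟩

theorem inter_frontier_nonempty_of_isPreconnected {X : Type*} [TopologicalSpace X] {s t : Set X}
    (ht : IsPreconnected t) (hts : (t ∩ s).Nonempty) (htsc : (t ∩ sᶜ).Nonempty) :
    (t ∩ frontier s).Nonempty := by
  by_contra hempty
  have interior_or : ∀ x ∈ t, x ∈ interior s ∨ x ∈ interior sᶜ := by
    intro x hx
    by_contra! h
    rw [interior_compl, notMem_compl_iff] at h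
    exact hempty ⟨x, hx, h.2, h.1⟩
  obtain ⟨x, -, hxs, hxsc⟩ := ht _ _ isOpen_interior isOpen_interior interior_or
    (hts.imp fun x ⟨hx, hxs⟩ => ⟨hx, (interior_or x hx).resolve_right
      fun h => interior_subset h hxs⟩)
    (htsc.imp fun x ⟨hx, hxs⟩ => ⟨hx, (interior_or x hx).resolve_left
      fun h => hxs (interior_subset h)⟩)
  exact interior_subset hxsc (interior_subset hxs)

theorem lipschitzWith_indicator_of_eqOn_frontier {E F : Type*} [NormedAddCommGroup E]
    [NormedSpace ℝ E] [NormedAddCommGroup F] {f : E → F} {s : Set E} {K : ℝ≥0}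
    (hs : IsClosed s) (hf : LipschitzOnWith K f s) (h0 : EqOn f 0 (frontier s)) :
    LipschitzWith K (s.indicator f) := by
  have norm_le : ∀ {x y}, x ∈ s → y ∉ s → dist (f x) 0 ≤ K * dist x y := by
    intro x y hx hy
    obtain ⟨z, hzxy, hz⟩ : (segment ℝ x y ∩ frontier s).Nonempty :=
      inter_frontier_nonempty_of_isPreconnected (convex_segment x y).isPreconnected
        ⟨x, left_mem_segment ℝ x y, hx⟩ ⟨y, right_mem_segment ℝ x y, hy⟩
    calc dist (f x) 0 = dist (f x) (f z) := by rw [h0 hz, Pi.zero_apply]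
      _ ≤ K * dist x z := hf.dist_le_mul x hx z (hs.frontier_subset hz)
      _ ≤ K * dist x y := by
        gcongr
        rw [← dist_add_dist_of_mem_segment hzxy]
        exact le_add_of_nonneg_right dist_nonneg
  refine LipschitzWith.of_dist_le_mul fun x y => ?_
  by_cases hx : x ∈ s <;> by_cases hy : y ∈ s <;> simp only [hx, hy, indicator_of_mem,
    indicator_of_notMem, not_false_eq_true]
  · exact hf.dist_le_mul x hx y hy
  · exact norm_le hx hy
  · rw [dist_comm, dist_comm x]
    exact norm_le hy hx
  · rw [dist_self]
    positivity

variable {E : Type*} [NormedAddCommGroup E] [NormedSpace ℝ E] [FiniteDimensional ℝ E]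

theorem det_one_add_pos_of_norm_lt_one {M : E →L[ℝ] E} (hM : ‖M‖ < 1) : 0 < (1 + M).det := by
  have : CompleteSpace E := FiniteDimensional.complete ℝ E
  by_contra! hneg
  have hcont : Continuous fun t : ℝ => (1 + t • M).det :=
    ContinuousLinearMap.continuous_det.comp (by fun_prop)
  obtain ⟨t, ht, hdet⟩ : (0 : ℝ) ∈ (fun t : ℝ => (1 + t • M).det) '' Icc 0 1 :=
    intermediate_value_Icc' zero_le_one hcont.continuousOn
      ⟨by simpa using hneg, by simp [ContinuousLinearMap.det]⟩
  have hnorm : ‖-(t • M)‖ < 1 := by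
    rw [norm_neg, norm_smul, Real.norm_of_nonneg ht.1]
    exact (mul_le_of_le_one_left (norm_nonneg M) ht.2).trans_lt hM
  have hunit : IsUnit (1 + t • M) := by simpa using isUnit_one_sub_of_norm_lt_one hnorm
  exact (LinearMap.isUnit_det _ (hunit.map ContinuousLinearMap.toLinearMapRingHom)).ne_zero hdet

variable [MeasurableSpace E] [BorelSpace E] {μ : Measure E} {g : E → E}
  {K : ℝ≥0} {U : Set E}

theorem integrableOn_det_one_add_smul_fderiv (hg : LipschitzWith K g) (hU : μ U ≠ ⊤) (t : ℝ) :
    IntegrableOn (fun x => (1 + t • fderiv ℝ g x).det) U μ := by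
  have : CompleteSpace E := FiniteDimensional.complete ℝ E
  have hcont : Continuous fun M : E →L[ℝ] E => (1 + t • M).det :=
    ContinuousLinearMap.continuous_det.comp (by fun_prop)
  obtain ⟨C, hC⟩ := (isCompact_closedBall (0 : E →L[ℝ] E) K).exists_bound_of_continuousOn
    hcont.continuousOn
  refine Measure.integrableOn_of_bounded hU
    (hcont.measurable.comp (measurable_fderiv ℝ g)).aestronglyMeasurable (M := C)
    (ae_of_all _ fun x => hC _ ?_)
  simpa using norm_fderiv_le_of_lipschitz ℝ hg (x₀ := x)

variable [μ.IsAddHaarMeasure]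

theorem integral_det_one_add_fderiv_of_lt_one (hK : K < 1) (hg : LipschitzWith K g)
    (hU : IsOpen U) (hgU : DifferentiableOn ℝ g U) (hg0 : ∀ x ∉ U, g x = 0) :
    ∫ x in U, (1 + fderiv ℝ g x).det ∂μ = μ.real U := by
  have : CompleteSpace E := FiniteDimensional.complete ℝ E
  have hbij := bijective_add_of_lipschitzWith_lt_one hg hK
  have image_eq : (fun x => x + g x) '' U = U := by
    rw [← compl_inj_iff, ← image_compl_eq hbij]
    refine (image_congr fun x hx => ?_).trans (image_id _)
    rw [hg0 x hx, add_zero, id]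
  have hderiv : ∀ x ∈ U, HasFDerivWithinAt (fun x => x + g x) (1 + fderiv ℝ g x) U x :=
    fun x hx => ((hasFDerivAt_id x).add
      (hgU.differentiableAt (hU.mem_nhds hx)).hasFDerivAt).hasFDerivWithinAt
  calc ∫ x in U, (1 + fderiv ℝ g x).det ∂μ = ∫ x in U, |(1 + fderiv ℝ g x).det| • (1 : ℝ) ∂μ := by
        refine integral_congr_ae (ae_of_all _ fun x => ?_)
        have hpos := det_one_add_pos_of_norm_lt_one
          ((norm_fderiv_le_of_lipschitz ℝ hg (x₀ := x)).trans_lt hK)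
        simp only [abs_of_pos hpos, smul_eq_mul, mul_one]
    _ = ∫ _ in (fun x => x + g x) '' U, (1 : ℝ) ∂μ :=
        (integral_image_eq_integral_abs_det_fderiv_smul μ hU.measurableSet hderiv
          hbij.injective.injOn fun _ => 1).symm
    _ = μ.real U := by rw [image_eq, setIntegral_const, smul_eq_mul, mul_one]

theorem integral_det_one_add_fderiv (hg : LipschitzWith K g) (hU : IsOpen U) (hUfin : μ U ≠ ⊤)
    (hgU : DifferentiableOn ℝ g U) (hg0 : ∀ x ∉ U, g x = 0) :
    ∫ x in U, (1 + fderiv ℝ g x).det ∂μ = μ.real U := by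
  choose p hdeg heval using fun x =>
    exists_polynomial_eval_eq_det_one_add_smul (fderiv ℝ g x : E →ₗ[ℝ] E)
  have heval' : ∀ t x, (p x).eval t = (1 + t • fderiv ℝ g x).det := fun t x => heval x t
  have small : ∀ t ∈ Ioo (0 : ℝ) (K + 1)⁻¹, ∫ x in U, (p x).eval t ∂μ = μ.real U := by
    intro t ht
    have hlip : LipschitzWith (‖t‖₊ * K) (t • g) := (lipschitzWith_smul t).comp hg
    have hlt : ‖t‖₊ * K < 1 := by
      rw [← NNReal.coe_lt_coe, NNReal.coe_mul, coe_nnnorm, Real.norm_of_nonneg ht.1.le]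
      calc t * K ≤ (K + 1)⁻¹ * K := by gcongr; exact ht.2.le
        _ < (K + 1)⁻¹ * (K + 1) := by gcongr; exact lt_add_one _
        _ = 1 := inv_mul_cancel₀ (by positivity)
    have := integral_det_one_add_fderiv_of_lt_one (μ := μ) hlt hlip hU (hgU.const_smul t)
      fun x hx => by rw [Pi.smul_apply, hg0 x hx, smul_zero]
    rw [← this]
    refine setIntegral_congr_fun hU.measurableSet fun x hx => ?_
    simp only [heval', fderiv_const_smul (hgU.differentiableAt (hU.mem_nhds hx))]
  have := integral_eval_eq_of_infinite hdeg
    (fun t => by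
      simp only [heval']
      exact integrableOn_det_one_add_smul_fderiv hg hUfin t)
    (Ioo_infinite (by positivity)) small 1
  simpa only [heval', one_smul] using this

end Displacement

section Brouwer

variable {E : Type*} [NormedAddCommGroup E] [InnerProductSpace ℝ E] [FiniteDimensional ℝ E]

theorem det_fderiv_eq_zero_of_norm_eq_const {r : E → E} {R : ℝ} (hR : R ≠ 0) {x : E}
    (hr : DifferentiableAt ℝ r x) (hnorm : ∀ y, ‖r y‖ = R) : (fderiv ℝ r x).det = 0 := by
  by_contra hdet
  have orthogonal : ∀ v, inner ℝ (r x) (fderiv ℝ r x v) = 0 := by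
    intro v
    have hconst : HasFDerivAt (fun y => ‖r y‖ ^ 2) (0 : E →L[ℝ] ℝ) x := by
      simp only [hnorm]
      exact hasFDerivAt_const _ _
    simpa using DFunLike.congr_fun (hr.hasFDerivAt.norm_sq.unique hconst) v
  obtain ⟨v, hv⟩ : ∃ v, fderiv ℝ r x v = r x :=
    (LinearMap.equivOfDetNeZero (fderiv ℝ r x : E →ₗ[ℝ] E) hdet).surjective (r x)
  have hzero : r x = 0 := (inner_self_eq_zero (𝕜 := ℝ)).mp (by rw [← orthogonal v, hv])
  exact hR (by rw [← hnorm x, hzero, norm_zero])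

theorem not_exists_contDiff_retraction_sphere {R : ℝ} (hR : 0 < R) :
    ¬ ∃ r : E → E, ContDiff ℝ 1 r ∧ (∀ x, ‖r x‖ = R) ∧ ∀ x, ‖x‖ = R → r x = x := by
  rintro ⟨r, hr, hnorm, hfix⟩
  borelize E
  have hdisp : ContDiff ℝ 1 fun x => r x - x := hr.sub contDiff_id
  obtain ⟨K, hK⟩ := hdisp.locallyLipschitz.locallyLipschitzOn.exists_lipschitzOnWith_of_compact
    (isCompact_closedBall (0 : E) R)
  have hlip : LipschitzWith K ((closedBall 0 R).indicator fun x => r x - x) := by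
    refine lipschitzWith_indicator_of_eqOn_frontier isClosed_closedBall hK fun x hx => ?_
    rw [frontier_closedBall _ hR.ne', mem_sphere_zero_iff_norm] at hx
    rw [hfix x hx, sub_self, Pi.zero_apply]
  set g := (closedBall 0 R).indicator fun x => r x - x
  have hg_deriv : ∀ x ∈ ball (0 : E) R, HasFDerivAt g (fderiv ℝ r x - 1) x := by
    intro x hx
    have heq : g =ᶠ[𝓝 x] fun x => r x - x := by
      filter_upwards [isOpen_ball.mem_nhds hx] with y hy
      exact indicator_of_mem (ball_subset_closedBall hy) _
    exact (((hr.differentiable one_ne_zero x).hasFDerivAt).sub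
      (hasFDerivAt_id x)).congr_of_eventuallyEq heq
  have hg0 : ∀ x ∉ ball (0 : E) R, g x = 0 := by
    intro x hx
    rw [mem_ball_zero_iff, not_lt] at hx
    rcases hx.eq_or_lt with h | h
    · simp [g, ← h, hfix x h.symm]
    · simp [g, h]
  have volume_eq := integral_det_one_add_fderiv (μ := volume) hlip isOpen_ball
    measure_ball_lt_top.ne
    (fun x hx => (hg_deriv x hx).differentiableAt.differentiableWithinAt) hg0
  have integral_zero : ∫ x in ball (0 : E) R, (1 + fderiv ℝ g x).det = 0 := by
    refine setIntegral_eq_zero_of_forall_eq_zero fun x hx => ?_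
    rw [(hg_deriv x hx).fderiv, add_sub_cancel]
    exact det_fderiv_eq_zero_of_norm_eq_const hR.ne' (hr.differentiable one_ne_zero x) hnorm
  exact (ENNReal.toReal_pos (measure_ball_pos volume 0 hR).ne' measure_ball_lt_top.ne).ne'
    (volume_eq.symm.trans integral_zero)

theorem exists_eq_zero_of_eq_self_on_sphere {G : E → E} (hG : ContDiff ℝ 1 G) {R : ℝ}
    (hR : 0 < R) (hfix : ∀ x, ‖x‖ = R → G x = x) : ∃ x, G x = 0 := by
  by_contra! hG0
  refine not_exists_contDiff_retraction_sphere hR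
    ⟨fun x => (R * ‖G x‖⁻¹) • G x, ?_, fun x => ?_, fun x hx => ?_⟩
  · exact (contDiff_const.mul
      ((hG.norm ℝ hG0).inv fun x => norm_ne_zero_iff.mpr (hG0 x))).smul hG
  · rw [norm_smul, norm_mul, norm_inv, norm_norm, Real.norm_of_nonneg hR.le,
      inv_mul_cancel_right₀ (norm_ne_zero_iff.mpr (hG0 x))]
  · beta_reduce
    rw [hfix x hx, hx, mul_inv_cancel₀ hR.ne', one_smul]

theorem exists_add_eq_zero_of_contDiff_of_bounded {f : E → E} (hf : ContDiff ℝ 1 f) {C : ℝ}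
    (hC : ∀ x, ‖f x‖ ≤ C) : ∃ x, x + f x = 0 := by
  have hC0 : 0 ≤ C := (norm_nonneg _).trans (hC 0)
  let χ : ContDiffBump (0 : E) := ⟨C + 1, C + 2, by linarith, by linarith⟩
  obtain ⟨x, hx⟩ := exists_eq_zero_of_eq_self_on_sphere (G := fun x => x + χ x • f x)
    (contDiff_id.add (χ.contDiff.smul hf)) (R := C + 2) (by linarith) fun x hx => by
      rw [χ.zero_of_le_dist (by rw [dist_zero_right, hx]), zero_smul, add_zero]
  have hnorm : ‖x‖ ≤ C := by
    rw [eq_neg_of_add_eq_zero_left hx, norm_neg, norm_smul, Real.norm_of_nonneg χ.nonneg]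
    exact (mul_le_of_le_one_left (norm_nonneg _) χ.le_one).trans (hC x)
  have hχ : χ x = 1 := χ.one_of_mem_closedBall (by
    rw [mem_closedBall_zero_iff]
    exact hnorm.trans (by simp [χ]))
  exact ⟨x, by rwa [hχ, one_smul] at hx⟩

theorem exists_add_eq_zero_of_continuous_of_bounded {b : E → E} (hb : Continuous b) {C : ℝ}
    (hC : ∀ x, ‖b x‖ ≤ C) : ∃ x, x + b x = 0 := by
  by_contra! hne
  obtain ⟨f, hf, hfb, -⟩ := hb.exists_contDiff_approx 1 (ε := fun x => min 1 ‖x + b x‖)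
    (by fun_prop) fun x => lt_min one_pos (norm_pos_iff.mpr (hne x))
  obtain ⟨x, hx⟩ := exists_add_eq_zero_of_contDiff_of_bounded hf (C := C + 1) fun x => by
    have := (hfb x).le.trans (min_le_left _ _)
    rw [dist_eq_norm] at this
    linarith [hC x, norm_le_norm_add_norm_sub' (f x) (b x)]
  have := (hfb x).trans_le (min_le_right _ _)
  rw [eq_neg_of_add_eq_zero_right hx, dist_eq_norm, ← norm_neg, neg_sub, sub_neg_eq_add,
    add_comm] at this
  exact lt_irrefl _ this

theorem surjective_add_of_continuous_of_isBounded_range {E : Type*} [NormedAddCommGroup E]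
    [NormedSpace ℝ E] [FiniteDimensional ℝ E] {b : E → E} (hb : Continuous b)
    (hbdd : Bornology.IsBounded (range b)) : Function.Surjective fun x => x + b x := by
  intro v
  let e : E ≃L[ℝ] EuclideanSpace ℝ (Fin (Module.finrank ℝ E)) := toEuclidean
  obtain ⟨C, hC⟩ := hbdd.exists_norm_le
  obtain ⟨y, hy⟩ := exists_add_eq_zero_of_continuous_of_bounded
    (b := fun y => e (b (e.symm y) - v)) (by fun_prop)
    (C := ‖(e : E →L[ℝ] EuclideanSpace ℝ (Fin (Module.finrank ℝ E)))‖ * (C + ‖v‖)) fun y => by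
      refine ((e : E →L[ℝ] EuclideanSpace ℝ (Fin (Module.finrank ℝ E))).le_opNorm _).trans ?_
      gcongr
      exact (norm_sub_le _ _).trans (by gcongr; exact hC _ (mem_range_self _))
  refine ⟨e.symm y, ?_⟩
  have := congrArg e.symm hy
  simp only [map_add, map_zero, e.symm_apply_apply] at this
  rwa [← add_sub_assoc, sub_eq_zero] at this

end Brouwer

section Torus

/-- The universal covering `ℝᵏ → Tᵏ`, as a group homomorphism. -/
noncomputable def torusProj (k : ℕ) : (Fin k → ℝ) →+ Torus k :=
  (QuotientAddGroup.mk' (AddSubgroup.zmultiples (1 : ℝ))).compLeft (Fin k)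

theorem isOpenQuotientMap_torusProj (k : ℕ) : IsOpenQuotientMap (torusProj k) :=
  IsOpenQuotientMap.piMap fun _ => QuotientAddGroup.isOpenQuotientMap_mk

theorem torusProj_eq_zero_iff {k : ℕ} {X : Fin k → ℝ} :
    torusProj k X = 0 ↔ ∃ z : Fin k → ℤ, X = fun i => (z i : ℝ) := by
  have coord : torusProj k X = 0 ↔ ∀ i, ∃ z : ℤ, z • (1 : ℝ) = X i :=
    funext_iff.trans (forall_congr' fun i => AddCircle.coe_eq_zero_iff (1 : ℝ))
  rw [coord, Classical.skolem]
  simp only [zsmul_one, funext_iff, eq_comm]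

variable {m n : ℕ}

theorem map_intCast_mulVec_intCast (A : Matrix (Fin n) (Fin m) ℤ) (z : Fin m → ℤ) :
    (A.map Int.cast *ᵥ fun i => (z i : ℝ)) = fun j => ((A *ᵥ z) j : ℝ) :=
  funext fun j => (RingHom.map_mulVec (Int.castRingHom ℝ) A z j).symm

theorem torusHom_torusProj (A : Matrix (Fin n) (Fin m) ℤ) (X : Fin m → ℝ) :
    torusHom A (torusProj m X) = torusProj n (A.map Int.cast *ᵥ X) := by
  funext j
  let π := QuotientAddGroup.mk' (AddSubgroup.zmultiples (1 : ℝ))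
  calc ∑ i, A j i • π (X i) = π (∑ i, A j i • X i) := by simp only [map_sum, map_zsmul]
    _ = π (∑ i, (A j i : ℝ) * X i) := by simp only [zsmul_eq_mul]

theorem torusHom_sub (A₁ A₂ : Matrix (Fin n) (Fin m) ℤ) (x : Torus m) :
    torusHom (A₁ - A₂) x = torusHom A₁ x - torusHom A₂ x := by
  funext j
  simp only [torusHom, ContinuousMap.coe_mk, Matrix.sub_apply, sub_smul, Finset.sum_sub_distrib,
    Pi.sub_apply]

theorem exists_eq_add_coe_of_homotopic {X : Type*} [TopologicalSpace X] {p : ℝ}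
    {f g : C(X, AddCircle p)} (hfg : f.Homotopic g) :
    ∃ u : C(X, ℝ), ∀ x, g x = f x + (u x : AddCircle p) := by
  obtain ⟨H⟩ := hfg
  let D : C(unitInterval × X, AddCircle p) := ⟨fun q => H q - f q.2, by fun_prop⟩
  have D_zero : ∀ x, D (0, x) = ((0 : ℝ) : AddCircle p) := fun x => by simp [D]
  let L := (AddCircle.isCoveringMap_coe p).liftHomotopy D 0 D_zero
  refine ⟨⟨fun x => L (1, x), by fun_prop⟩, fun x => ?_⟩
  have lift_one : (L (1, x) : AddCircle p) = D (1, x) :=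
    congrFun ((AddCircle.isCoveringMap_coe p).liftHomotopy_lifts D 0 D_zero) (1, x)
  simp [lift_one, D]

theorem exists_eq_add_torusProj_of_homotopic {X : Type*} [TopologicalSpace X]
    {f g : C(X, Torus n)} (hfg : f.Homotopic g) :
    ∃ h : C(X, Fin n → ℝ), ∀ x, g x = f x + torusProj n (h x) := by
  obtain ⟨H⟩ := hfg
  choose u hu using fun j => exists_eq_add_coe_of_homotopic
    (f := ⟨fun x => f x j, by fun_prop⟩) (g := ⟨fun x => g x j, by fun_prop⟩)
    ⟨⟨⟨fun q => H q j, by fun_prop⟩, fun x => by simp, fun x => by simp⟩⟩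
  exact ⟨.pi u, fun x => funext fun j => hu j x⟩

/-- The lift to `ℝᵐ → ℝⁿ` of the map `x ↦ A x + h x` of tori, where `h` is null-homotopic and given
by its real-valued lift. -/
noncomputable def perturbedLift (A : Matrix (Fin n) (Fin m) ℤ) (h : C(Torus m, Fin n → ℝ))
    (X : Fin m → ℝ) : Fin n → ℝ :=
  A.map Int.cast *ᵥ X + h (torusProj m X)

/-- The zeros of the map of tori `x ↦ A x + h x` lifted by `perturbedLift A h`. -/
def perturbedZeros (A : Matrix (Fin n) (Fin m) ℤ) (h : C(Torus m, Fin n → ℝ)) : Set (Torus m) :=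
  {x | torusHom A x + torusProj n (h x) = 0}

variable {A : Matrix (Fin n) (Fin m) ℤ} {h : C(Torus m, Fin n → ℝ)}

theorem perturbedLift_zero (X : Fin m → ℝ) : perturbedLift A 0 X = A.map Int.cast *ᵥ X :=
  add_zero _

theorem continuous_perturbedLift : Continuous (perturbedLift A h) :=
  (continuous_const.matrix_mulVec continuous_id).add
    (h.continuous.comp (isOpenQuotientMap_torusProj m).continuous)

theorem torusProj_mem_perturbedZeros_iff {X : Fin m → ℝ} :
    torusProj m X ∈ perturbedZeros A h ↔
      ∃ v : Fin n → ℤ, perturbedLift A h X = fun j => (v j : ℝ) := by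
  rw [← torusProj_eq_zero_iff, perturbedLift, map_add, ← torusHom_torusProj]
  rfl

theorem mk_eq_mk_of_torusProj_eq {X Y : Fin m → ℝ} (hXY : torusProj m X = torusProj m Y)
    {v w : Fin n → ℤ} (hX : perturbedLift A h X = fun j => (v j : ℝ))
    (hY : perturbedLift A h Y = fun j => (w j : ℝ)) :
    Submodule.Quotient.mk (p := LinearMap.range A.mulVecLin) v = Submodule.Quotient.mk w := by
  obtain ⟨z, hz⟩ := torusProj_eq_zero_iff.mp (map_sub (torusProj m) X Y ▸ sub_eq_zero.mpr hXY)
  refine (Submodule.Quotient.eq _).mpr ⟨z, ?_⟩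
  have lift_sub : A.map Int.cast *ᵥ (X - Y) = (fun j => (v j : ℝ)) - fun j => (w j : ℝ) := by
    rw [← hX, ← hY, perturbedLift, perturbedLift, hXY, Matrix.mulVec_sub, add_sub_add_right_eq_sub]
  rw [hz, map_intCast_mulVec_intCast] at lift_sub
  funext j
  have lift_sub_apply : ((A *ᵥ z) j : ℝ) = v j - w j := congrFun lift_sub j
  exact_mod_cast lift_sub_apply

theorem exists_torusProj_eq_and_perturbedLift_eq (x : perturbedZeros A h) :
    ∃ (X : Fin m → ℝ) (v : Fin n → ℤ),
      torusProj m X = x ∧ perturbedLift A h X = fun j => (v j : ℝ) := by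
  obtain ⟨X, hX⟩ := (isOpenQuotientMap_torusProj m).surjective x
  obtain ⟨v, hv⟩ := torusProj_mem_perturbedZeros_iff.mp (hX ▸ x.2)
  exact ⟨X, v, hX, hv⟩

/-- The Nielsen (Reidemeister) class of a zero `x`: the class modulo `A ℤᵐ` of the integer vector
`perturbedLift A h X`, for any lift `X` of `x`. -/
noncomputable def reidemeisterClass (x : perturbedZeros A h) :
    (Fin n → ℤ) ⧸ LinearMap.range A.mulVecLin :=
  Submodule.Quotient.mk (exists_torusProj_eq_and_perturbedLift_eq x).choose_spec.choose

theorem reidemeisterClass_eq_mk {x : perturbedZeros A h} {X : Fin m → ℝ} (hX : torusProj m X = x)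
    {v : Fin n → ℤ} (hv : perturbedLift A h X = fun j => (v j : ℝ)) :
    reidemeisterClass x = Submodule.Quotient.mk v :=
  have hspec := (exists_torusProj_eq_and_perturbedLift_eq x).choose_spec.choose_spec
  mk_eq_mk_of_torusProj_eq (hspec.1.trans hX.symm) hspec.2 hv

theorem isLocallyConstant_reidemeisterClass :
    IsLocallyConstant (reidemeisterClass (A := A) (h := h)) := by
  let proj := (perturbedZeros A h).restrictPreimage (torusProj m)
  have proj_quotient : IsOpenQuotientMap proj := (isOpenQuotientMap_torusProj m).restrictPreimage _
  choose v hv using fun X : torusProj m ⁻¹' perturbedZeros A h =>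
    torusProj_mem_perturbedZeros_iff.mp X.2
  have v_cont : Continuous v := by
    have cast_embedding : IsEmbedding (Pi.map fun _ : Fin n => (Int.cast : ℤ → ℝ)) :=
      IsEmbedding.piMap fun _ => Int.isClosedEmbedding_coe_real.isEmbedding
    refine cast_embedding.continuous_iff.mpr ?_
    exact (continuous_perturbedLift.comp continuous_subtype_val).congr hv
  have comp_eq : reidemeisterClass ∘ proj = Submodule.Quotient.mk ∘ v :=
    funext fun X => reidemeisterClass_eq_mk rfl (hv X)
  intro s
  rw [← proj_quotient.isQuotientMap.isOpen_preimage, ← preimage_comp, comp_eq]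
  exact ((IsLocallyConstant.iff_continuous v).mpr v_cont).comp _ s

theorem reidemeisterClass_surjective {B : Matrix (Fin m) (Fin n) ℝ}
    (hB : A.map (Int.cast : ℤ → ℝ) * B = 1) :
    Function.Surjective (reidemeisterClass (A := A) (h := h)) := by
  intro c
  obtain ⟨v, rfl⟩ := Submodule.Quotient.mk_surjective _ c
  obtain ⟨Y, hY⟩ := surjective_add_of_continuous_of_isBounded_range
    (b := fun Y => h (torusProj m (B *ᵥ Y)))
    (h.continuous.comp ((isOpenQuotientMap_torusProj m).continuous.comp
      (continuous_const.matrix_mulVec continuous_id)))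
    ((isCompact_range h.continuous).isBounded.subset (range_comp_subset_range _ h))
    fun j => (v j : ℝ)
  have lift_eq : perturbedLift A h (B *ᵥ Y) = fun j => (v j : ℝ) := by
    rw [perturbedLift, Matrix.mulVec_mulVec, hB, Matrix.one_mulVec]
    exact hY
  exact ⟨⟨_, torusProj_mem_perturbedZeros_iff.mpr ⟨v, lift_eq⟩⟩,
    reidemeisterClass_eq_mk rfl lift_eq⟩

theorem joined_of_reidemeisterClass_eq {x y : perturbedZeros A 0}
    (hxy : reidemeisterClass x = reidemeisterClass y) : Joined x y := by
  obtain ⟨X, v, hX, hv⟩ := exists_torusProj_eq_and_perturbedLift_eq x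
  obtain ⟨Y, w, hY, hw⟩ := exists_torusProj_eq_and_perturbedLift_eq y
  rw [reidemeisterClass_eq_mk hX hv, reidemeisterClass_eq_mk hY hw] at hxy
  obtain ⟨z, hz : A *ᵥ z = v - w⟩ := (Submodule.Quotient.eq _).mp hxy
  let Y' : Fin m → ℝ := Y + fun i => (z i : ℝ)
  have hY' : torusProj m Y' = y := by
    rw [map_add, torusProj_eq_zero_iff.mpr ⟨z, rfl⟩, add_zero, hY]
  rw [perturbedLift_zero] at hv hw
  have hv' : A.map Int.cast *ᵥ Y' = fun j => (v j : ℝ) := by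
    rw [Matrix.mulVec_add, hw, map_intCast_mulVec_intCast, hz]
    funext j
    simp
  refine (joinedIn_iff_joined x.2 y.2).mp (JoinedIn.ofLine
    (f := fun t => torusProj m (AffineMap.lineMap X Y' t)) ?_ ?_ ?_ ?_)
  · exact ((isOpenQuotientMap_torusProj m).continuous.comp
      AffineMap.lineMap_continuous).continuousOn
  · rw [AffineMap.lineMap_apply_zero, hX]
  · rw [AffineMap.lineMap_apply_one, hY']
  · rintro _ ⟨t, -, rfl⟩
    refine torusProj_mem_perturbedZeros_iff.mpr ⟨v, ?_⟩
    rw [perturbedLift_zero, AffineMap.lineMap_apply_module', Matrix.mulVec_add, Matrix.mulVec_smul,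
      Matrix.mulVec_sub, hv, hv', sub_self, smul_zero, zero_add]

end Torus

section ZerothHomotopy

variable {X T : Type*} [TopologicalSpace X] {f : X → T}

theorem card_le_card_zerothHomotopy (hf : IsLocallyConstant f) (hsurj : Function.Surjective f) :
    ENat.card T ≤ ENat.card (ZerothHomotopy X) := by
  let F : ZerothHomotopy X → T := ZerothHomotopy.lift f fun x y γ => by
    simpa using (hf.comp_continuous γ.continuous).apply_eq_of_preconnectedSpace 0 1
  have F_surj : Function.Surjective F := fun t => (hsurj t).imp' ZerothHomotopy.mk fun x hx => hx
  exact ENat.card_le_card_of_injective (Function.injective_surjInv F_surj)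

theorem card_zerothHomotopy_le_card (hf : ∀ x y, f x = f y → Joined x y) :
    ENat.card (ZerothHomotopy X) ≤ ENat.card T := by
  let rep := Function.surjInv (ZerothHomotopy.mk_surjective (X := X))
  refine ENat.card_le_card_of_injective (f := f ∘ rep) fun a b hab => ?_
  obtain ⟨γ⟩ := hf _ _ hab
  simpa only [rep, Function.surjInv_eq] using ZerothHomotopy.sound γ

end ZerothHomotopy

section Coincidence

variable {m n : ℕ} {A₁ A₂ : Matrix (Fin n) (Fin m) ℤ}

theorem exists_coincidenceSet_eq_perturbedZeros {g₁ g₂ : C(Torus m, Torus n)}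
    (h₁ : (torusHom A₁).Homotopic g₁) (h₂ : (torusHom A₂).Homotopic g₂) :
    ∃ h, {x | g₁ x = g₂ x} = perturbedZeros (A₁ - A₂) h := by
  obtain ⟨u₁, hu₁⟩ := exists_eq_add_torusProj_of_homotopic h₁
  obtain ⟨u₂, hu₂⟩ := exists_eq_add_torusProj_of_homotopic h₂
  refine ⟨u₁ - u₂, Set.ext fun x => ?_⟩
  change g₁ x = g₂ x ↔ torusHom (A₁ - A₂) x + torusProj n (u₁ x - u₂ x) = 0
  rw [← sub_eq_zero, hu₁, hu₂, torusHom_sub, map_sub, add_sub_add_comm]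

theorem coincidenceSet_torusHom_eq_perturbedZeros :
    {x | torusHom A₁ x = torusHom A₂ x} = perturbedZeros (A₁ - A₂) 0 := by
  ext x
  change torusHom A₁ x = torusHom A₂ x ↔ torusHom (A₁ - A₂) x + torusProj n 0 = 0
  rw [map_zero, add_zero, torusHom_sub, sub_eq_zero]

theorem MCC_torusHom_le : MCC (torusHom A₁) (torusHom A₂) ≤
    ENat.card ((Fin n → ℤ) ⧸ LinearMap.range (A₁ - A₂).mulVecLin) := by
  refine (iInf_le _ ⟨(torusHom A₁, torusHom A₂), .refl _, .refl _⟩).trans ?_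
  change ENat.card (ZerothHomotopy {x | torusHom A₁ x = torusHom A₂ x}) ≤ _
  rw [coincidenceSet_torusHom_eq_perturbedZeros]
  exact card_zerothHomotopy_le_card fun x y => joined_of_reidemeisterClass_eq

theorem le_MCC_torusHom {B : Matrix (Fin m) (Fin n) ℝ}
    (hB : (A₁ - A₂).map (Int.cast : ℤ → ℝ) * B = 1) :
    ENat.card ((Fin n → ℤ) ⧸ LinearMap.range (A₁ - A₂).mulVecLin) ≤
      MCC (torusHom A₁) (torusHom A₂) := by
  refine le_iInf fun ⟨g, hg₁, hg₂⟩ => ?_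
  obtain ⟨h, coincidence_eq⟩ := exists_coincidenceSet_eq_perturbedZeros hg₁ hg₂
  change _ ≤ ENat.card (ZerothHomotopy {x | g.1 x = g.2 x})
  rw [coincidence_eq]
  exact card_le_card_zerothHomotopy isLocallyConstant_reidemeisterClass
    (reidemeisterClass_surjective hB)

end Coincidence

theorem stmt5 (m n : ℕ) (hnm : n ≤ m) (hn : 1 ≤ n)
    (A₁ A₂ : Matrix (Fin n) (Fin m) ℤ)
    (hrank : ((A₁ - A₂).map (Int.cast : ℤ → ℚ)).rank = n) :
    MCC (torusHom A₁) (torusHom A₂) =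
      (Nat.card ((Fin n → ℤ) ⧸ LinearMap.range (A₁ - A₂).mulVecLin) : ℕ∞) := by
  have rank_eq_card := hrank.trans (Fintype.card_fin n).symm
  have := finite_quotient_range_mulVecLin_of_rank_eq_card rank_eq_card
  obtain ⟨B, hB⟩ := exists_map_intCast_mul_eq_one_of_rank_eq_card rank_eq_card ℝ
  rw [← ENat.card_eq_coe_natCard]
  exact le_antisymm MCC_torusHom_le (le_MCC_torusHom hB)
end

section
/- Let G be a nontrivial finite group acting freely by diffeomorphisms on the sphere Sⁿ, let N = Sⁿ/G be the orbit space, and let m, n ≥ 2. Then for all continuous maps f₁, f₂ : Sᵐ → N, the set of path components of the homotopy coincidence space E(f₁,f₂) has exactly #G elements (the Reidemeister number equals the order of G). -/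
open scoped Manifold

/-- The unit sphere `Sᵏ ⊆ ℝ^{k+1}`. -/
abbrev Sph (k : ℕ) : Type :=
  Metric.sphere (0 : EuclideanSpace ℝ (Fin (k + 1))) 1

/-- The homotopy coincidence space `E(f₁,f₂)`. -/
abbrev HCS {X Y : Type} [TopologicalSpace X] [TopologicalSpace Y]
    (f₁ f₂ : C(X, Y)) : Type :=
  {p : X × C(unitInterval, Y) // p.2 0 = f₁ p.1 ∧ p.2 1 = f₂ p.1}

/-!
Let `π : S → N` be the quotient by a free action of `G` on a simply connected space, and lift
`f₁`, `f₂` to `F₁`, `F₂ : X → S`. If `(x, θ)` lies in `E(f₁, f₂)`, the lift of `θ` starting at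
`F₁ x` ends at `g • F₂ x` for a unique `g : G`, and by unique path lifting `g` is constant along
paths of `E(f₁, f₂)`. So `E(f₁, f₂)` splits into `G`-many pieces, each of which is the image of
some `E(F₁, g • F₂)`, and that space is path connected because `S` is simply connected.

Simple connectedness of spheres is that of `E ∖ {0}`, `2 < dim E`: a loop there can be deformed to
a polynomial one, which by Sard's theorem misses a ray, whose complement is star-convex.
-/

open unitInterval Topology Set Module
open scoped ContinuousMap

section SimplyConnected

variable {V : Type*} [AddCommGroup V] [Module ℝ V]

theorem starConvex_setOf_not_sameRay (v : V) : StarConvex ℝ (-v) {z | ¬SameRay ℝ z v} := by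
  intro z hz a b ha hb hab hray
  have hbz : SameRay ℝ (b • z) v := by
    have hsum := hray.add_left (SameRay.sameRay_nonneg_smul_left v ha)
    rwa [smul_neg, neg_add_eq_sub, sub_add_cancel] at hsum
  obtain rfl | hb := hb.eq_or_lt
  · obtain rfl : a = 1 := by simpa using hab
    have hv : v = 0 := eq_zero_of_sameRay_self_neg (R := ℝ) (by simpa using hray.symm)
    exact hz (hv ▸ .zero_right z)
  · refine hz ?_
    simpa [smul_smul, hb.ne'] using hbz.pos_smul_left (inv_pos.2 hb)

theorem isSimplyConnected_setOf_not_sameRay [TopologicalSpace V] [ContinuousAdd V]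
    [ContinuousSMul ℝ V] {v : V} (hv : v ≠ 0) : IsSimplyConnected {z : V | ¬SameRay ℝ z v} := by
  have hne : {z : V | ¬SameRay ℝ z v}.Nonempty :=
    ⟨-v, fun h => hv (eq_zero_of_sameRay_self_neg h.symm)⟩
  have := (starConvex_setOf_not_sameRay v).contractibleSpace hne
  exact SimplyConnectedSpace.ofContractible _

variable {E : Type*} [NormedAddCommGroup E] [NormedSpace ℝ E]

theorem exists_contDiff_norm_sub_lt (n : WithTop ℕ∞) (γ : C(I, E)) {ε : ℝ} (hε : 0 < ε) :
    ∃ P : ℝ → E, ContDiff ℝ n P ∧ P 0 = γ 0 ∧ P 1 = γ 1 ∧ ∀ s : I, ‖P s - γ s‖ < ε := by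
  obtain ⟨N, hN, hN0⟩ := ((Metric.tendsto_nhds.1 (bernsteinApproximation_uniform γ) ε hε).and
    (Filter.eventually_ne_atTop 0)).exists
  let P : ℝ → E := fun s => ∑ k : Fin (N + 1),
    ((N.choose k : ℝ) * s ^ (k : ℕ) * (1 - s) ^ (N - k)) • γ (bernstein.z k)
  have hP (s : I) : P s = bernsteinApproximation N γ s := by
    simp [P, bernsteinApproximation.apply, bernstein_apply]
  refine ⟨P, ContDiff.sum fun k _ => by fun_prop, ?_, ?_, fun s => ?_⟩
  · simpa using hP 0
  · simpa [hN0] using hP 1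
  · rw [hP, ← dist_eq_norm]
    exact (ContinuousMap.dist_apply_le_dist s).trans_lt hN

theorem exists_forall_not_sameRay (hE : 2 < finrank ℝ E) {P : ℝ → E} (hP : ContDiff ℝ 1 P)
    (hP0 : ∀ s ∈ I, P s ≠ 0) : ∃ v, ∀ s ∈ I, ¬SameRay ℝ (P s) v := by
  have : FiniteDimensional ℝ E := .of_finrank_pos (by lia)
  have hcone : ContDiff ℝ 1 fun q : ℝ × ℝ => q.1 • P q.2 := by fun_prop
  obtain ⟨v, hv⟩ := (hcone.dense_compl_range_of_finrank_lt_finrank (by simpa using hE)).nonempty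
  refine ⟨v, fun s hs hray => ?_⟩
  obtain ⟨a, -, ha⟩ := hray.exists_nonneg_left (hP0 s hs)
  exact hv ⟨(a, s), ha⟩

theorem exists_path_homotopy_forall_ne_zero {x y : E} {γ δ : Path x y}
    (h : ∀ s, ‖δ s - γ s‖ < ‖γ s‖) : ∃ H : γ.Homotopy δ, ∀ q, H q ≠ 0 := by
  refine ⟨⟨.affine γ.toContinuousMap δ.toContinuousMap, ?_⟩, fun q hq => ?_⟩
  · rintro t s (rfl | rfl) <;> simp
  · replace hq : AffineMap.lineMap (γ q.2) (δ q.2) (q.1 : ℝ) = 0 := hq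
    have hγ : ‖γ q.2‖ = q.1 * ‖δ q.2 - γ q.2‖ := by
      rw [AffineMap.lineMap_apply_module', add_eq_zero_iff_neg_eq'] at hq
      rw [← norm_neg, hq, norm_smul, Real.norm_of_nonneg q.1.2.1]
    exact (h q.2).not_ge (hγ.trans_le (mul_le_of_le_one_left (norm_nonneg _) q.1.2.2))

theorem isSimplyConnected_compl_singleton_zero (hE : 2 < finrank ℝ E) :
    IsSimplyConnected ({0}ᶜ : Set E) := by
  have hrank : 1 < Module.rank ℝ E := one_lt_rank_of_one_lt_finrank (one_lt_two.trans hE)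
  refine isSimplyConnected_iff_exists_homotopy_refl_forall_mem.2
    ⟨isPathConnected_compl_singleton_of_one_lt_rank hrank 0, fun x γ hγ => ?_⟩
  obtain ⟨s₀, hs₀⟩ := γ.continuous.norm.exists_forall_le (by simp)
  obtain ⟨P, hP, hP0, hP1, hPγ⟩ :=
    exists_contDiff_norm_sub_lt 1 γ.toContinuousMap (norm_pos_iff.2 (hγ s₀))
  have hPs (s : I) : ‖P s - γ s‖ < ‖γ s‖ := (hPγ s).trans_le (hs₀ s)
  have hPne (s : ℝ) (hs : s ∈ I) : P s ≠ 0 := fun h => by simpa [h] using hPs ⟨s, hs⟩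
  have hPc : Continuous P := hP.continuous
  let δ : Path x x := ⟨⟨fun s : I => P s, by fun_prop⟩, by simp [hP0], by simp [hP1]⟩
  obtain ⟨H, hH⟩ := exists_path_homotopy_forall_ne_zero (γ := γ) (δ := δ) hPs
  obtain ⟨v, hv⟩ := exists_forall_not_sameRay hE hP hPne
  have hv0 : v ≠ 0 := fun h => hv 0 unitInterval.zero_mem (h ▸ .zero_right _)
  obtain ⟨K, hK⟩ := (isSimplyConnected_iff_exists_homotopy_refl_forall_mem.1
    (isSimplyConnected_setOf_not_sameRay hv0)).2 x δ fun s => hv s s.2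
  refine ⟨H.trans K, fun q hq => ?_⟩
  rw [Path.Homotopy.trans_apply] at hq
  split_ifs at hq
  · exact hH _ hq
  · exact hK _ ((mem_singleton_iff.1 hq).symm ▸ SameRay.zero_left v)

theorem simplyConnectedSpace_sphere (hE : 2 < finrank ℝ E) {r : ℝ} (hr : 0 < r) :
    SimplyConnectedSpace (Metric.sphere (0 : E) r) := by
  have := (isSimplyConnected_compl_singleton_zero hE).simplyConnectedSpace
  have : ContractibleSpace (Ioi (0 : ℝ)) := (convex_Ioi 0).contractibleSpace nonempty_Ioi
  have e : ({0}ᶜ : Set E) ≃ₕ Metric.sphere (0 : E) r :=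
    (homeomorphSphereProd E r hr).toHomotopyEquiv.trans <|
      ((ContinuousMap.HomotopyEquiv.refl _).prodCongr
        (ContractibleSpace.hequiv_unit (Ioi (0 : ℝ))).some).trans
      (Homeomorph.prodPUnit _).toHomotopyEquiv
  exact e.simplyConnectedSpace_iff.1 inferInstance

end SimplyConnected

namespace HCS

section

variable {X Y : Type} [TopologicalSpace X] [TopologicalSpace Y] {F G : C(X, Y)}

/-- The point of `E(F, G)` given by a base point `x` and a path from `F x` to `G x`. -/
def ofPath (x : X) (γ : Path (F x) (G x)) : HCS F G :=
  ⟨(x, γ.toContinuousMap), γ.source, γ.target⟩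

/-- The map `E(F, G) → E(f, g)` induced by a map `π` of the targets with `π ∘ F = f`,
`π ∘ G = g`. -/
def map {Z : Type} [TopologicalSpace Z] (π : C(Y, Z)) {f g : C(X, Z)} (hf : ∀ x, π (F x) = f x)
    (hg : ∀ x, π (G x) = g x) (p : HCS F G) : HCS f g :=
  ⟨(p.1.1, π.comp p.1.2), by simp [p.2.1, hf], by simp [p.2.2, hg]⟩

theorem continuous_map {Z : Type} [TopologicalSpace Z] (π : C(Y, Z)) {f g : C(X, Z)}
    (hf : ∀ x, π (F x) = f x) (hg : ∀ x, π (G x) = g x) : Continuous (map π hf hg) := by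
  unfold map
  fun_prop

theorem joined_ofPath_of_continuous (c : C(I, X)) {Γ : ∀ t, Path (F (c t)) (G (c t))}
    (hΓ : Continuous ↿Γ) : Joined (ofPath (c 0) (Γ 0)) (ofPath (c 1) (Γ 1)) := by
  let K : C(I, C(I, Y)) := ContinuousMap.curry ⟨↿Γ, hΓ⟩
  have hc : Continuous fun t => ofPath (c t) (Γ t) :=
    ((map_continuous c).prodMk (map_continuous K)).subtype_mk _
  exact ⟨⟨⟨_, hc⟩, rfl, rfl⟩⟩

theorem joined_ofPath_of_homotopic {x : X} {γ δ : Path (F x) (G x)} (h : γ.Homotopic δ) :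
    Joined (ofPath x γ) (ofPath x δ) := by
  obtain ⟨H⟩ := h
  have := joined_ofPath_of_continuous (.const I x) (Γ := H.eval) H.continuous
  simpa using this

theorem exists_joined_ofPath (c : C(I, X)) (γ : Path (F (c 0)) (G (c 0))) :
    ∃ δ : Path (F (c 1)) (G (c 1)), Joined (ofPath (c 0) γ) (ofPath (c 1) δ) := by
  let α (t : I) : Path (F (c t)) (F (c 0)) :=
    ⟨⟨fun s => F (c (t * σ s)), by fun_prop⟩, by simp, by simp⟩
  let β (t : I) : Path (G (c 0)) (G (c t)) :=
    ⟨⟨fun s => G (c (t * s)), by fun_prop⟩, by simp, by simp⟩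
  let Γ (t : I) : Path (F (c t)) (G (c t)) := ((α t).trans γ).trans (β t)
  have hα : Continuous ↿α := by
    change Continuous fun q : I × I => F (c (q.1 * σ q.2))
    fun_prop
  have hβ : Continuous ↿β := by
    change Continuous fun q : I × I => G (c (q.1 * q.2))
    fun_prop
  have hγ : Continuous ↿fun _ : I => γ := γ.continuous.comp continuous_snd
  have hΓ : Continuous ↿Γ :=
    Path.trans_continuous_family _ (Path.trans_continuous_family _ hα _ hγ) _ hβ
  have hα0 : α 0 = .refl _ := by ext; simp [α]
  have hβ0 : β 0 = .refl _ := by ext; simp [β]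
  have hΓ0 : γ.Homotopic (Γ 0) := by
    simp only [Γ, hα0, hβ0]
    exact .symm ⟨(Path.Homotopy.transRefl _).trans (Path.Homotopy.reflTrans _)⟩
  exact ⟨Γ 1, (joined_ofPath_of_homotopic hΓ0).trans (joined_ofPath_of_continuous c hΓ)⟩

theorem joined_of_simplyConnectedSpace [PathConnectedSpace X] [SimplyConnectedSpace Y]
    (p q : HCS F G) : Joined p q := by
  obtain ⟨⟨x, γ⟩, hγ⟩ := p
  obtain ⟨⟨y, γ'⟩, hγ'⟩ := q
  obtain ⟨c, rfl, rfl⟩ : ∃ c : C(I, X), c 0 = x ∧ c 1 = y :=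
    have ⟨c⟩ := PathConnectedSpace.joined x y
    ⟨c, c.source, c.target⟩
  obtain ⟨δ, hδ⟩ := exists_joined_ofPath c ⟨γ, hγ.1, hγ.2⟩
  exact hδ.trans (joined_ofPath_of_homotopic
    (SimplyConnectedSpace.paths_homotopic δ ⟨γ', hγ'.1, hγ'.2⟩))

end

section Sheet

variable {X S N : Type} [TopologicalSpace X] [TopologicalSpace S] [TopologicalSpace N]
  {G : Type*} [Group G] [MulAction G S] {π : S → N} {F₁ F₂ : C(X, S)} {f₁ f₂ : C(X, N)}

/-- The piece of `E(f₁, f₂)` labelled by `g : G`: the points `(x, θ)` whose path `θ` lifts through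
`π` to a path from `F₁ x` to `g • F₂ x`, where `F₁`, `F₂` are lifts of `f₁`, `f₂`. -/
def sheet (π : S → N) (F₁ F₂ : C(X, S)) (f₁ f₂ : C(X, N)) (g : G) : Set (HCS f₁ f₂) :=
  {p | ∃ Γ : Path (F₁ p.1.1) (g • F₂ p.1.1), ∀ s, π (Γ s) = p.1.2 s}

variable (hπ : IsQuotientCoveringMap π G)
include hπ

theorem sheet_nonempty [Nonempty X] [PathConnectedSpace S] (hF₁ : ∀ x, π (F₁ x) = f₁ x)
    (hF₂ : ∀ x, π (F₂ x) = f₂ x) (g : G) : (sheet π F₁ F₂ f₁ f₂ g).Nonempty := by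
  obtain ⟨x⟩ := ‹Nonempty X›
  obtain ⟨Γ⟩ := PathConnectedSpace.joined (F₁ x) (g • F₂ x)
  have hπc : Continuous π := hπ.continuous
  exact ⟨⟨(x, ⟨fun s => π (Γ s), by fun_prop⟩), by simp [hF₁], by simp [hπ.map_smul, hF₂]⟩,
    Γ, fun _ => rfl⟩

theorem exists_mem_sheet (hF₁ : ∀ x, π (F₁ x) = f₁ x) (hF₂ : ∀ x, π (F₂ x) = f₂ x)
    (p : HCS f₁ f₂) : ∃ g : G, p ∈ sheet π F₁ F₂ f₁ f₂ g := by
  obtain ⟨Γ, hΓ, hΓ0⟩ :=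
    hπ.isCoveringMap.exists_path_lifts p.1.2 (F₁ p.1.1) (by rw [p.2.1, hF₁])
  have hΓ1 : π (Γ 1) = π (F₂ p.1.1) := by
    rw [hF₂, ← p.2.2]
    exact congr_fun hΓ 1
  obtain ⟨g, hg⟩ := hπ.apply_eq_iff_mem_orbit.1 hΓ1
  exact ⟨g, ⟨Γ, hΓ0, hg.symm⟩, congr_fun hΓ⟩

theorem eq_of_mem_sheet {p : HCS f₁ f₂} {g h : G} (hg : p ∈ sheet π F₁ F₂ f₁ f₂ g)
    (hh : p ∈ sheet π F₁ F₂ f₁ f₂ h) : g = h := by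
  obtain ⟨Γ, hΓ⟩ := hg
  obtain ⟨Δ, hΔ⟩ := hh
  have hΓΔ : (Γ : I → S) = Δ := hπ.isCoveringMap.eq_of_comp_eq Γ.continuous Δ.continuous
    (funext fun s => (hΓ s).trans (hΔ s).symm) 0 (by simp)
  have hsmul : g • F₂ p.1.1 = h • F₂ p.1.1 := by simpa using congr_fun hΓΔ 1
  exact hπ.isCancelSMul.right_cancel _ _ _ hsmul

theorem mem_sheet_of_joined (hF₁ : ∀ x, π (F₁ x) = f₁ x) (hF₂ : ∀ x, π (F₂ x) = f₂ x)
    {p q : HCS f₁ f₂} (h : Joined p q) {g : G} (hp : p ∈ sheet π F₁ F₂ f₁ f₂ g) :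
    q ∈ sheet π F₁ F₂ f₁ f₂ g := by
  obtain ⟨w⟩ := h
  obtain ⟨Γ, hΓ⟩ := hp
  have hcov := hπ.isCoveringMap
  have := hπ.toContinuousConstSMul
  let H : C(I × I, N) := ⟨fun q => (w q.2).1.2 q.1, by fun_prop⟩
  let F₁w : C(I, S) := ⟨fun t => F₁ (w t).1.1, by fun_prop⟩
  have hH0 (t : I) : H (0, t) = π (F₁w t) := (w t).2.1.trans (hF₁ _).symm
  let L := hcov.liftHomotopy H F₁w hH0
  have hL (s t : I) : π (L (s, t)) = (w t).1.2 s :=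
    congr_fun (hcov.liftHomotopy_lifts H F₁w hH0) (s, t)
  have hL0 (t : I) : L (0, t) = F₁ (w t).1.1 := hcov.liftHomotopy_zero H F₁w hH0 t
  have hstart : (fun s => L (s, 0)) = Γ :=
    hcov.eq_of_comp_eq (by fun_prop) Γ.continuous
      (funext fun s => by simp [hL, hΓ]) 0 (by simp [hL0])
  have hend : (fun t => L (1, t)) = fun t => g • F₂ (w t).1.1 := by
    refine hcov.eq_of_comp_eq (by fun_prop) (by fun_prop) (funext fun t => ?_) 0 ?_
    · simp [hL, hπ.map_smul, hF₂, (w t).2.2]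
    · simpa using congr_fun hstart 1
  exact ⟨⟨⟨fun s => L (s, 1), by fun_prop⟩, by simp [hL0], by simpa using congr_fun hend 1⟩,
    fun s => by simp [hL]⟩

theorem joined_of_mem_sheet [PathConnectedSpace X] [SimplyConnectedSpace S]
    (hF₁ : ∀ x, π (F₁ x) = f₁ x) (hF₂ : ∀ x, π (F₂ x) = f₂ x)
    {p q : HCS f₁ f₂} {g : G} (hp : p ∈ sheet π F₁ F₂ f₁ f₂ g)
    (hq : q ∈ sheet π F₁ F₂ f₁ f₂ g) : Joined p q := by
  have := hπ.toContinuousConstSMul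
  have hgF₂ (x : X) : π ((g • F₂) x) = f₂ x := (hπ.map_smul g).trans (hF₂ x)
  let μ : HCS F₁ (g • F₂) → HCS f₁ f₂ := map ⟨π, hπ.continuous⟩ hF₁ hgF₂
  have hμ {r : HCS f₁ f₂} (hr : r ∈ sheet π F₁ F₂ f₁ f₂ g) : ∃ r', μ r' = r :=
    have ⟨Γ, hΓ⟩ := hr
    ⟨ofPath r.1.1 Γ, Subtype.ext (Prod.ext rfl (ContinuousMap.ext hΓ))⟩
  obtain ⟨p', rfl⟩ := hμ hp
  obtain ⟨q', rfl⟩ := hμ hq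
  exact (joined_of_simplyConnectedSpace p' q').map (continuous_map _ hF₁ hgF₂)

end Sheet

end HCS

theorem card_zerothHomotopy_eq_of_surjective {Z ι : Type*} [TopologicalSpace Z] {φ : Z → ι}
    (hφ : φ.Surjective) (h : ∀ p q, Joined p q ↔ φ p = φ q) :
    Nat.card (ZerothHomotopy Z) = Nat.card ι :=
  Nat.card_congr <| (Quotient.congr (.refl Z) h).trans (Setoid.quotientKerEquivOfSurjective φ hφ)

theorem HCS.card_zerothHomotopy_of_lifts {X S N : Type} [TopologicalSpace X] [TopologicalSpace S]
    [TopologicalSpace N] [PathConnectedSpace X] [SimplyConnectedSpace S] {G : Type*} [Group G]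
    [MulAction G S] {π : S → N} (hπ : IsQuotientCoveringMap π G) {F₁ F₂ : C(X, S)}
    {f₁ f₂ : C(X, N)} (hF₁ : ∀ x, π (F₁ x) = f₁ x) (hF₂ : ∀ x, π (F₂ x) = f₂ x) :
    Nat.card (ZerothHomotopy (HCS f₁ f₂)) = Nat.card G := by
  choose φ hφ using exists_mem_sheet hπ hF₁ hF₂
  refine card_zerothHomotopy_eq_of_surjective (φ := φ) (fun g => ?_)
    fun p q => ⟨fun h => ?_, fun h => ?_⟩
  · obtain ⟨p, hp⟩ := sheet_nonempty hπ hF₁ hF₂ g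
    exact ⟨p, eq_of_mem_sheet hπ (hφ p) hp⟩
  · exact eq_of_mem_sheet hπ (mem_sheet_of_joined hπ hF₁ hF₂ h (hφ p)) (hφ q)
  · exact joined_of_mem_sheet hπ hF₁ hF₂ (hφ p) (h ▸ hφ q)

theorem exists_lift_of_simplyConnectedSpace {X S N : Type*} [TopologicalSpace X]
    [TopologicalSpace S] [TopologicalSpace N] [SimplyConnectedSpace X]
    [LocallyPathConnectedSpace X] {π : S → N} (hπ : IsCoveringMap π) (hsurj : π.Surjective)
    (f : C(X, N)) : ∃ F : C(X, S), ∀ x, π (F x) = f x := by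
  obtain ⟨x₀⟩ : Nonempty X := inferInstance
  obtain ⟨e₀, he₀⟩ := hsurj (f x₀)
  obtain ⟨F, ⟨-, hF⟩, -⟩ := hπ.existsUnique_continuousMap_lifts f x₀ e₀ he₀
  exact ⟨F, congr_fun hF⟩

theorem isQuotientCoveringMap_quotientMk_of_free {G S : Type*} [Group G] [Finite G]
    [TopologicalSpace S] [T2Space S] [LocallyCompactSpace S] [MulAction G S]
    [ContinuousConstSMul G S] (hfree : ∀ (g : G) (x : S), g • x = x → g = 1) :
    IsQuotientCoveringMap (Quotient.mk (MulAction.orbitRel G S)) G := by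
  have : IsCancelSMul G S := isCancelSMul_iff_eq_one_of_smul_eq.2 hfree
  exact isQuotientCoveringMap_quotientMk_of_properlyDiscontinuousSMul

theorem stmt10_general {X S N : Type} [TopologicalSpace X] [SimplyConnectedSpace X]
    [LocallyPathConnectedSpace X] [TopologicalSpace S] [SimplyConnectedSpace S]
    [TopologicalSpace N] {G : Type*} [Group G] [MulAction G S] {π : S → N}
    (hπ : IsQuotientCoveringMap π G) (f₁ f₂ : C(X, N)) :
    Nat.card (ZerothHomotopy (HCS f₁ f₂)) = Nat.card G := by
  obtain ⟨F₁, hF₁⟩ := exists_lift_of_simplyConnectedSpace hπ.isCoveringMap hπ.surjective f₁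
  obtain ⟨F₂, hF₂⟩ := exists_lift_of_simplyConnectedSpace hπ.isCoveringMap hπ.surjective f₂
  exact HCS.card_zerothHomotopy_of_lifts hπ hF₁ hF₂

theorem simplyConnectedSpace_sph {n : ℕ} (hn : 2 ≤ n) : SimplyConnectedSpace (Sph n) :=
  simplyConnectedSpace_sphere (by rw [finrank_euclideanSpace_fin]; omega) one_pos

instance (n : ℕ) : LocallyPathConnectedSpace (Sph n) :=
  ChartedSpace.locallyPathConnectedSpace (EuclideanSpace ℝ (Fin n)) (Sph n)

theorem stmt10 (m n : ℕ) (hm : 2 ≤ m) (hn : 2 ≤ n)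
    (G : Type) [Group G] [Finite G] [Nontrivial G] [MulAction G (Sph n)]
    -- the action is by diffeomorphisms:
    (hsmooth : ∀ g : G, ContMDiff (𝓡 n) (𝓡 n) (⊤ : ℕ∞) fun x : Sph n => g • x)
    -- the action is free:
    (hfree : ∀ (g : G) (x : Sph n), g • x = x → g = 1)
    (f₁ f₂ : C(Sph m, Quotient (MulAction.orbitRel G (Sph n)))) :
    Nat.card (ZerothHomotopy (HCS f₁ f₂)) = Nat.card G := by
  have := simplyConnectedSpace_sph hm
  have := simplyConnectedSpace_sph hn
  have : ContinuousConstSMul G (Sph n) := ⟨fun g => (hsmooth g).continuous⟩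
  exact stmt10_general (isQuotientCoveringMap_quotientMk_of_free hfree) f₁ f₂
end
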